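/- Let X be a Banach space, ∂ a feasible subdifferential, and f : X → ℝ ∪ {+∞} a proper lower semicontinuous function. If ∂f is a monotone operator (⟨x₂* − x₁*, x₂ − x₁⟩ ≥ 0 whenever x_i* ∈ ∂f(x_i), i = 1, 2), then f is convex. -/

import Mathlib

open Filter Topology

/-- Convexity for `EReal`-valued functions on a set. -/
def ERealConvexOn {X : Type*} [AddCommGroup X] [Module ℝ X]
    (U : Set X) (f : X → EReal) : Prop :=
  ∀ x ∈ U, ∀ y ∈ U, ∀ a b : ℝ, 0 ≤ a → 0 ≤ b → a + b = 1 →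
    f (a • x + b • y) ≤ (a : EReal) * f x + (b : EReal) * f y

/-- The Fenchel (convex) subdifferential of an `EReal`-valued function relative to a set `U`. -/
def FenchelSubdiffOn {X : Type*} [NormedAddCommGroup X] [NormedSpace ℝ X]
    (f : X → EReal) (U : Set X) (x : X) : Set (X →L[ℝ] ℝ) :=
  {p | ∀ y ∈ U, f x + ((p (y - x) : ℝ) : EReal) ≤ f y}

/-- A feasible subdifferential in the sense of Ivanov–Zlateva: a map assigning to each
extended-real-valued function and point a set of continuous linear functionals, satisfying
(P1) agreement with the Fenchel subdifferential on convex continuous functions, and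
(P2) a fuzzy variational sum rule at local minima of `f + g` with `g` convex continuous. -/
structure FeasibleSubdifferential (X : Type*) [NormedAddCommGroup X] [NormedSpace ℝ X] where
  D : (X → EReal) → X → Set (X →L[ℝ] ℝ)
  P1 : ∀ (f : X → EReal) (x : X) (U : Set X), IsOpen U → x ∈ U → Convex ℝ U →
      ERealConvexOn U f → ContinuousOn f U → (∀ y ∈ U, f y ≠ ⊤ ∧ f y ≠ ⊥) →
      D f x = FenchelSubdiffOn f U x
  P2 : ∀ (f g : X → EReal) (x : X) (V : Set X), LowerSemicontinuous f → f x ≠ ⊤ →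
      IsOpen V → x ∈ V → Convex ℝ V → ERealConvexOn V g → ContinuousOn g V →
      (∀ y ∈ V, g y ≠ ⊤ ∧ g y ≠ ⊥) →
      IsLocalMin (fun y => f y + g y) x →
      ∃ (y : ℕ → X) (ys : ℕ → X →L[ℝ] ℝ) (ystar : X →L[ℝ] ℝ),
        Tendsto y atTop (𝓝 x) ∧ Tendsto (fun n => f (y n)) atTop (𝓝 (f x)) ∧
        (∀ n, ys n ∈ D f (y n)) ∧
        (∀ v : X, Tendsto (fun n => ys n v) atTop (𝓝 (ystar v))) ∧
        -ystar ∈ FenchelSubdiffOn g V x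

namespace CJT

/-- Ekeland's variational principle, for a real function on a set with closed sublevel sets. -/
theorem ekeland {X : Type*} [MetricSpace X] [CompleteSpace X] (A : Set X) (ψ : X → ℝ)
    (hcl : ∀ c : ℝ, IsClosed {x | x ∈ A ∧ ψ x ≤ c}) (m : ℝ) (hm : ∀ x ∈ A, m ≤ ψ x)
    (ε : ℝ) (hε : 0 < ε) (p : X) (hp : p ∈ A) :
    ∃ z ∈ A, ψ z + ε * dist z p ≤ ψ p ∧ ∀ w ∈ A, ψ z ≤ ψ w + ε * dist w z := by
  have step : ∀ (n : ℕ) (x : A), ∃ w : A, ψ w + ε * dist (w : X) x ≤ ψ x ∧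
      ∀ v ∈ A, ψ v + ε * dist v (x : X) ≤ ψ x → ψ w ≤ ψ v + 1 / ((n : ℝ) + 1) := by
    intro n x
    set T : Set ℝ := ψ '' {v | v ∈ A ∧ ψ v + ε * dist v (x : X) ≤ ψ x} with hT
    have hne : T.Nonempty := ⟨ψ x, x, ⟨x.2, by simp⟩, rfl⟩
    have hbd : BddBelow T := ⟨m, by rintro _ ⟨v, hv, rfl⟩; exact hm v hv.1⟩
    have hpos : (0 : ℝ) < 1 / ((n : ℝ) + 1) := by positivity
    obtain ⟨_, ⟨w, hw, rfl⟩, hlt⟩ := exists_lt_of_csInf_lt hne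
      (show sInf T < sInf T + 1 / ((n : ℝ) + 1) by linarith)
    refine ⟨⟨w, hw.1⟩, hw.2, fun v hv hv2 => ?_⟩
    have := csInf_le hbd (show ψ v ∈ T from ⟨v, ⟨hv, hv2⟩, rfl⟩)
    show ψ w ≤ _
    linarith
  choose nx hnx1 hnx2 using step
  obtain ⟨s, hs0, hs⟩ : ∃ s : ℕ → A, (s 0 : X) = p ∧ ∀ n, s (n + 1) = nx n (s n) :=
    ⟨fun n => Nat.rec ⟨p, hp⟩ (fun k x => nx k x) n, rfl, fun n => rfl⟩
  have hmono : ∀ n k : ℕ, ψ (s (n + k)) + ε * dist (s (n + k) : X) (s n) ≤ ψ (s n) := by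
    intro n k
    induction k with
    | zero => simp
    | succ k ih =>
      have h1 := hnx1 (n + k) (s (n + k))
      rw [← hs] at h1
      have h2 := dist_triangle (s (n + k + 1) : X) (s (n + k)) (s n)
      have h3 := mul_le_mul_of_nonneg_left h2 hε.le
      rw [← add_assoc]
      linarith
  have hanti : Antitone (fun n => ψ (s n)) := by
    apply antitone_nat_of_succ_le
    intro n
    have := hmono n 1
    have h0 : 0 ≤ ε * dist (s (n + 1) : X) (s n) := by positivity
    linarith
  have hbdd : BddBelow (Set.range fun n => ψ (s n)) :=
    ⟨m, by rintro _ ⟨n, rfl⟩; exact hm _ (s n).2⟩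
  have hlim := tendsto_atTop_ciInf hanti hbdd
  have hge : ∀ n, (⨅ n, ψ (s n)) ≤ ψ (s n) := fun n => ciInf_le hbdd n
  set L := ⨅ n, ψ (s n) with hL
  have hcau : CauchySeq (fun n => (s n : X)) := by
    refine cauchySeq_of_le_tendsto_0' (fun n => (ψ (s n) - L) / ε) ?_ ?_
    · intro n k hnk
      obtain ⟨j, rfl⟩ := Nat.exists_eq_add_of_le hnk
      rw [le_div_iff₀ hε, dist_comm]
      have := hmono n j
      have := hge (n + j)
      linarith
    · have := (hlim.sub_const L).div_const ε
      simpa using this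
  obtain ⟨z, hz⟩ := cauchySeq_tendsto_of_complete hcau
  have hzS : ∀ n, z ∈ A ∧ ψ z + ε * dist z (s n : X) ≤ ψ (s n) := by
    intro n
    have key : ∀ δ > 0, z ∈ A ∧ ψ z ≤ ψ (s n) - ε * dist z (s n : X) + δ := by
      intro δ hδ
      refine (hcl (ψ (s n) - ε * dist z (s n : X) + δ)).mem_of_tendsto hz ?_
      have hd : Tendsto (fun k => ε * dist (s k : X) (s n)) atTop (𝓝 (ε * dist z (s n : X))) :=
        (hz.dist tendsto_const_nhds).const_mul ε
      have h1 := hd.eventually (lt_mem_nhds (show ε * dist z (s n : X) - δ < _ by linarith))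
      filter_upwards [h1, eventually_ge_atTop n] with k hk hnk
      obtain ⟨j, rfl⟩ := Nat.exists_eq_add_of_le hnk
      refine ⟨(s (n + j)).2, ?_⟩
      have := hmono n j
      linarith
    refine ⟨(key 1 one_pos).1, ?_⟩
    have : ψ z ≤ ψ (s n) - ε * dist z (s n : X) :=
      le_of_forall_pos_le_add fun δ hδ => (key δ hδ).2
    linarith
  have hz0 := (hzS 0).2
  rw [hs0] at hz0
  refine ⟨z, (hzS 0).1, hz0, ?_⟩
  intro w hw
  by_contra hcon
  push Not at hcon
  have hwS : ∀ n, ψ w + ε * dist w (s n : X) ≤ ψ (s n) := by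
    intro n
    have h1 := (hzS n).2
    have h2 := mul_le_mul_of_nonneg_left (dist_triangle w z (s n : X)) hε.le
    linarith
  have hd : ∀ n : ℕ, dist (s (n + 1) : X) w ≤ (1 / ((n : ℝ) + 1)) / ε := by
    intro n
    have h1 := hnx2 n (s n) w hw (hwS n)
    rw [← hs] at h1
    have h2 := hwS (n + 1)
    rw [le_div_iff₀ hε, dist_comm]
    linarith
  have ht : Tendsto (fun n => (s (n + 1) : X)) atTop (𝓝 w) := by
    rw [tendsto_iff_dist_tendsto_zero]
    refine squeeze_zero (fun _ => dist_nonneg) hd ?_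
    simpa using (tendsto_one_div_add_atTop_nhds_zero_nat (𝕜 := ℝ)).div_const ε
  have heq : w = z := tendsto_nhds_unique ht (hz.comp (tendsto_add_atTop_nat 1))
  subst heq
  simp at hcon

theorem lsc_add {X : Type*} [TopologicalSpace X] (f : X → EReal) (hf : LowerSemicontinuous f)
    (k : X → ℝ) (hk : Continuous k) : LowerSemicontinuous (fun w => f w + (k w : EReal)) := by
  refine hf.add' (continuous_coe_real_ereal.comp hk).lowerSemicontinuous ?_
  intro x
  exact EReal.continuousAt_add (Or.inr (EReal.coe_ne_bot _)) (Or.inr (EReal.coe_ne_top _))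

theorem convexOn_infDist {X : Type*} [NormedAddCommGroup X] [NormedSpace ℝ X] (S : Set X)
    (hS : IsCompact S) (hne : S.Nonempty) (hc : Convex ℝ S) :
    ConvexOn ℝ Set.univ (fun w => Metric.infDist w S) := by
  refine ⟨convex_univ, ?_⟩
  intro x _ y _ a b ha hb hab
  obtain ⟨u, hu, hxu⟩ := hS.exists_infDist_eq_dist hne x
  obtain ⟨v, hv, hyv⟩ := hS.exists_infDist_eq_dist hne y
  simp only [smul_eq_mul, hxu, hyv]
  refine (Metric.infDist_le_dist_of_mem (hc hu hv ha hb hab)).trans ?_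
  rw [dist_eq_norm, dist_eq_norm, dist_eq_norm]
  have : a • x + b • y - (a • u + b • v) = a • (x - u) + b • (y - v) := by
    simp only [smul_sub]; abel
  rw [this]
  refine (norm_add_le _ _).trans ?_
  rw [norm_smul, norm_smul, Real.norm_of_nonneg ha, Real.norm_of_nonneg hb]

/-- Approximate variational principle for a feasible subdifferential. -/
theorem approx {X : Type*} [NormedAddCommGroup X] [NormedSpace ℝ X] [CompleteSpace X]
    (D : FeasibleSubdifferential X) (f : X → EReal) (hfbot : ∀ x, f x ≠ ⊥)
    (hflsc : LowerSemicontinuous f) (k : X → ℝ) (hkc : Continuous k)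
    (hk : ConvexOn ℝ Set.univ k) (p : X) (hp : f p ≠ ⊤) (R ε η : ℝ) (hε : 0 < ε)
    (hη : η < ε * R)
    (hmin : ∀ w ∈ Metric.closedBall p R, (((f p).toReal + k p - η : ℝ) : EReal) ≤ f w + (k w : ℝ))
    (hR : 0 < R) :
    ∃ (z : X) (y : ℕ → X) (ys : ℕ → X →L[ℝ] ℝ) (ystar : X →L[ℝ] ℝ),
      dist z p < R ∧ f z ≠ ⊤ ∧ Tendsto y atTop (𝓝 z) ∧
      Tendsto (fun n => (f (y n)).toReal) atTop (𝓝 (f z).toReal) ∧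
      (∀ᶠ n in atTop, f (y n) ≠ ⊤) ∧ (∀ n, ys n ∈ D.D f (y n)) ∧
      (∀ v, Tendsto (fun n => ys n (v - y n)) atTop (𝓝 (ystar (v - z)))) ∧
      (∀ v, k z - ystar (v - z) ≤ k v + ε * dist v z) := by
  have hF : ∀ w, f w ≠ ⊤ → ((f w).toReal : EReal) = f w := fun w hw =>
    EReal.coe_toReal hw (hfbot w)
  obtain ⟨z, hzA, hz1, hz2⟩ := ekeland {w | w ∈ Metric.closedBall p R ∧ f w ≠ ⊤}
    (fun w => (f w).toReal + k w) (by
      intro c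
      have h1 := (lsc_add f hflsc k hkc).isClosed_preimage (c : EReal)
      have h2 := (Metric.isClosed_closedBall (x := p) (ε := R)).inter h1
      convert! h2 using 1
      ext w
      simp only [Set.mem_ofPred_eq, Set.mem_inter_iff, Set.mem_preimage, Set.mem_Iic]
      constructor
      · rintro ⟨⟨h3, h4⟩, h5⟩
        refine ⟨h3, ?_⟩
        rw [← hF w h4]
        exact_mod_cast h5
      · rintro ⟨h3, h4⟩
        have h5 : f w ≠ ⊤ := by
          intro h
          rw [h, EReal.top_add_coe] at h4
          exact absurd h4 (by simp)
        refine ⟨⟨h3, h5⟩, ?_⟩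
        rw [← hF w h5] at h4
        exact_mod_cast h4) ((f p).toReal + k p - η) (by
      rintro w ⟨h1, h2⟩
      have := hmin w h1
      rw [← hF w h2] at this
      exact_mod_cast this) ε hε p ⟨by simp [hR.le], hp⟩
  obtain ⟨hzb, hzt⟩ := hzA
  have hdz : dist z p < R := by
    have h1 := hmin z hzb
    rw [← hF z hzt] at h1
    have h2 : (f p).toReal + k p - η ≤ (f z).toReal + k z := by exact_mod_cast h1
    by_contra h
    push Not at h
    have := mul_le_mul_of_nonneg_left h hε.le
    linarith
  let g : X → ℝ := fun w => k w + ε * dist w z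
  have hgc : Continuous g := by fun_prop
  have hg : ConvexOn ℝ Set.univ g := hk.add ((convexOn_univ_dist z).smul hε.le)
  obtain ⟨y, ys, ystar, hy, hfy, hys, hweak, hsub⟩ := D.P2 f (fun w => (g w : EReal)) z Set.univ
    hflsc hzt isOpen_univ (Set.mem_univ _) convex_univ (by
      intro x hx y hy a b ha hb hab
      have := hg.2 hx hy ha hb hab
      simp only [smul_eq_mul] at this
      show (g (a • x + b • y) : EReal) ≤ (a : EReal) * (g x : EReal) + (b : EReal) * (g y : EReal)
      exact_mod_cast this) (continuous_coe_real_ereal.comp hgc).continuousOn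
    (fun y _ => ⟨EReal.coe_ne_top _, EReal.coe_ne_bot _⟩) (by
      have hnb : Metric.closedBall p R ∈ 𝓝 z :=
        mem_of_superset (Metric.isOpen_ball.mem_nhds (Metric.mem_ball.2 hdz))
          Metric.ball_subset_closedBall
      filter_upwards [hnb] with w hw
      by_cases hwt : f w = ⊤
      · rw [hwt, EReal.top_add_coe]; exact le_top
      · have := hz2 w ⟨hw, hwt⟩
        rw [← hF z hzt, ← hF w hwt]
        have h3 : (f z).toReal + g z ≤ (f w).toReal + g w := by
          simp only [g, dist_self]; linarith
        exact_mod_cast h3)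
  refine ⟨z, y, ys, ystar, hdz, hzt, hy, ?_, ?_, hys, ?_, ?_⟩
  · exact (EReal.tendsto_toReal hzt (hfbot z)).comp hfy
  · exact hfy.eventually_ne hzt
  · intro v
    obtain ⟨C, hC⟩ := banach_steinhaus (g := ys) (fun x => by
      obtain ⟨C, hC⟩ := (hweak x).norm.bddAbove_range
      exact ⟨C, fun i => hC ⟨i, rfl⟩⟩)
    have h0 : Tendsto (fun n => ys n (z - y n)) atTop (𝓝 0) := by
      refine squeeze_zero_norm (a := fun n => C * ‖z - y n‖) (fun n => ?_) ?_
      · exact ((ys n).le_opNorm _).trans (mul_le_mul_of_nonneg_right (hC n) (norm_nonneg _))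
      · have : Tendsto (fun n => z - y n) atTop (𝓝 0) := by
          simpa using (tendsto_const_nhds (x := z)).sub hy
        simpa using this.norm.const_mul C
    have h1 := (hweak (v - z)).add h0
    rw [add_zero] at h1
    refine h1.congr fun n => ?_
    rw [← map_add]; congr 1; abel
  · intro v
    have h : (g z : EReal) + (((-ystar) (v - z) : ℝ) : EReal) ≤ (g v : EReal) :=
      hsub v (Set.mem_univ v)
    have h' : g z + (-ystar) (v - z) ≤ g v := by exact_mod_cast h
    simp only [g, dist_self, neg_apply] at h'
    linarith

/-- Monotonicity: each subgradient is a global affine minorant. -/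
theorem global_minorant {X : Type*} [NormedAddCommGroup X] [NormedSpace ℝ X] [CompleteSpace X]
    (D : FeasibleSubdifferential X) (f : X → EReal) (hfbot : ∀ x, f x ≠ ⊥)
    (hflsc : LowerSemicontinuous f)
    (hmon : ∀ x₁ x₂ : X, ∀ x₁s ∈ D.D f x₁, ∀ x₂s ∈ D.D f x₂,
      0 ≤ x₂s (x₂ - x₁) - x₁s (x₂ - x₁))
    (x : X) (hx : f x ≠ ⊤) (xs : X →L[ℝ] ℝ) (hxs : xs ∈ D.D f x) (y : X) :
    (((f x).toReal + xs (y - x) : ℝ) : EReal) ≤ f y := by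
  by_contra hcon
  push Not at hcon
  have hF : ∀ w, f w ≠ ⊤ → ((f w).toReal : EReal) = f w := fun w hw =>
    EReal.coe_toReal hw (hfbot w)
  have hyt : f y ≠ ⊤ := hcon.ne_top
  rw [← hF y hyt] at hcon
  have hlt : (f y).toReal < (f x).toReal + xs (y - x) := by exact_mod_cast hcon
  obtain ⟨c, hc0, hc⟩ : ∃ c : ℝ, 0 < c ∧
      (f y).toReal + c * dist y x < (f x).toReal + xs (y - x) := by
    set t := (f x).toReal + xs (y - x) - (f y).toReal with ht
    have ht0 : 0 < t := by linarith
    have hd : 0 ≤ dist y x := dist_nonneg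
    refine ⟨t / (dist y x + 1), by positivity, ?_⟩
    have : t / (dist y x + 1) * dist y x < t := by
      rw [div_mul_eq_mul_div, div_lt_iff₀ (by positivity)]
      nlinarith
    linarith
  let κ : X → ℝ := fun w => -xs w + c * dist w x
  have hκc : Continuous κ := by fun_prop
  have hκ : ConvexOn ℝ Set.univ κ := by
    refine ConvexOn.add ?_ ((convexOn_univ_dist x).smul hc0.le)
    exact ((-xs : X →L[ℝ] ℝ) : X →ₗ[ℝ] ℝ).convexOn convex_univ
  have hφ := lsc_add f hflsc κ hκc
  let S := segment ℝ y x
  have hSc : IsCompact S := by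
    have : S = (fun t : ℝ => AffineMap.lineMap y x t) '' Set.Icc (0 : ℝ) 1 :=
      segment_eq_image_lineMap ℝ y x
    rw [this]
    exact isCompact_Icc.image AffineMap.lineMap_continuous
  have hyS : y ∈ S := left_mem_segment ℝ y x
  have hxS : x ∈ S := right_mem_segment ℝ y x
  obtain ⟨p, hpS, hpmin⟩ := LowerSemicontinuousOn.exists_isMinOn ⟨y, hyS⟩ hSc
    (hφ.lowerSemicontinuousOn S)
  have hpy : f p + (κ p : EReal) ≤ f y + (κ y : EReal) := hpmin hyS
  have hpt : f p ≠ ⊤ := by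
    intro h
    rw [h, EReal.top_add_coe, ← hF y hyt, ← EReal.coe_add] at hpy
    exact absurd hpy (by simp [-EReal.coe_add])
  have hpy' : (f p).toReal + κ p ≤ (f y).toReal + κ y := by
    rw [← hF p hpt, ← hF y hyt] at hpy
    exact_mod_cast hpy
  have hpx : p ≠ x := by
    rintro rfl
    simp only [κ, dist_self] at hpy'
    rw [map_sub] at hc
    linarith
  set m := (f p).toReal + κ p with hm
  have hmE : f p + (κ p : EReal) = (m : EReal) := by
    rw [← hF p hpt, hm]; simp
  -- local lower bound
  have hloc : ∀ᶠ w in 𝓝 p, ((m - 1 : ℝ) : EReal) < f w + (κ w : EReal) := by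
    refine hφ p _ ?_
    show _ < f p + (κ p : EReal)
    rw [hmE]
    exact_mod_cast (by linarith : m - 1 < m)
  obtain ⟨r, hr, hrb⟩ := Metric.eventually_nhds_iff.1 hloc
  have hdpx : 0 < dist p x := dist_pos.2 hpx
  obtain ⟨R, hR, hRr, hRp⟩ : ∃ R, 0 < R ∧ R < r ∧ R < dist p x :=
    ⟨min r (dist p x) / 2, by positivity, by
      have := min_le_left r (dist p x); linarith, by
      have := min_le_right r (dist p x); linarith⟩
  have hη : 0 < c / 2 * R / 2 := by positivity
  obtain ⟨δ, hδ, hδS⟩ := hSc.exists_thickening_subset_open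
    (hφ.isOpen_preimage ((m - c / 2 * R / 2 : ℝ) : EReal)) (by
      intro w hw
      have h1 : f p + (κ p : EReal) ≤ f w + (κ w : EReal) := hpmin hw
      rw [hmE] at h1
      refine lt_of_lt_of_le ?_ h1
      exact_mod_cast (by linarith : m - c / 2 * R / 2 < m))
  let k : X → ℝ := fun w => κ w + δ⁻¹ * Metric.infDist w S
  have hkc : Continuous k := hκc.add ((Metric.continuous_infDist_pt S).const_mul _)
  have hk : ConvexOn ℝ Set.univ k :=
    hκ.add ((convexOn_infDist S hSc ⟨y, hyS⟩ (convex_segment y x)).smul (inv_pos.2 hδ).le)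
  have hi0 : ∀ w ∈ S, Metric.infDist w S = 0 := fun w hw => Metric.infDist_zero_of_mem hw
  have hkp : k p = κ p := by simp [k, hi0 p hpS]
  have hkx : k x = -xs x := by simp [k, κ, hi0 x hxS]
  obtain ⟨z, u, us, ustar, hzR, hzt, hu, hfu, hut, hus, hlim, hsub⟩ :=
    approx D f hfbot hflsc k hkc hk p hpt R (c / 2) (c / 2 * R / 2) (by positivity)
      (by linarith) (by
        intro w hw
        rw [hkp, ← hm]
        by_cases hwt : f w = ⊤
        · rw [hwt, EReal.top_add_coe]; exact le_top
        have h1 := hrb (lt_of_le_of_lt (Metric.mem_closedBall.1 hw) hRr)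
        rw [← hF w hwt] at h1 ⊢
        have h1' : m - 1 < (f w).toReal + κ w := by exact_mod_cast h1
        have hd : 0 ≤ Metric.infDist w S := Metric.infDist_nonneg
        suffices m - c / 2 * R / 2 ≤ (f w).toReal + k w by exact_mod_cast this
        by_cases hwS : w ∈ Metric.thickening δ S
        · have h2 : ((m - c / 2 * R / 2 : ℝ) : EReal) < f w + (κ w : EReal) := hδS hwS
          rw [← hF w hwt] at h2
          have h2' : m - c / 2 * R / 2 < (f w).toReal + κ w := by exact_mod_cast h2
          have : 0 ≤ δ⁻¹ * Metric.infDist w S := by positivity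
          simp only [k]; linarith
        · have h3 : δ ≤ Metric.infDist w S := by
            by_contra h
            push Not at h
            obtain ⟨v, hv, hwv⟩ := (Metric.infDist_lt_iff ⟨y, hyS⟩).1 h
            exact hwS (Metric.mem_thickening_iff.2 ⟨v, hv, hwv⟩)
          have h4 : 1 ≤ δ⁻¹ * Metric.infDist w S := by
            rw [inv_mul_eq_div, le_div_iff₀ hδ]; linarith
          simp only [k]; linarith) hR
  have hzx : 0 < dist z x := by
    have := dist_triangle p z x
    rw [dist_comm p z] at this
    linarith
  have hs := hsub x
  have hkz : -xs z + c * dist z x ≤ k z := by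
    have : 0 ≤ δ⁻¹ * Metric.infDist z S :=
      mul_nonneg (inv_pos.2 hδ).le Metric.infDist_nonneg
    simp only [k, κ]; linarith
  rw [hkx, dist_comm x z] at hs
  have hpos : 0 < ustar (x - z) - xs (x - z) := by
    rw [map_sub xs]
    have : 0 < c / 2 * dist z x := by positivity
    linarith
  have hL : Tendsto (fun n => us n (x - u n) - xs (x - u n)) atTop
      (𝓝 (ustar (x - z) - xs (x - z))) := by
    refine (hlim x).sub ?_
    exact (xs.continuous.tendsto _).comp (tendsto_const_nhds.sub hu)
  obtain ⟨n, hn⟩ := (hL.eventually (lt_mem_nhds hpos)).exists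
  have := hmon (u n) x (us n) (hus n) xs hxs
  linarith

end CJT

/-- Correa–Jofré–Thibault theorem: monotonicity of a feasible subdifferential implies
convexity of the function. -/
theorem correa_jofre_thibault {X : Type*} [NormedAddCommGroup X] [NormedSpace ℝ X]
    [CompleteSpace X]
    (D : FeasibleSubdifferential X)
    (f : X → EReal) (hfbot : ∀ x, f x ≠ ⊥) (hfproper : ∃ x, f x ≠ ⊤)
    (hflsc : LowerSemicontinuous f)
    (hmon : ∀ x₁ x₂ : X, ∀ x₁s ∈ D.D f x₁, ∀ x₂s ∈ D.D f x₂,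
      0 ≤ x₂s (x₂ - x₁) - x₁s (x₂ - x₁)) :
    ERealConvexOn Set.univ f := by
  have hF : ∀ w, f w ≠ ⊤ → ((f w).toReal : EReal) = f w := fun w hw =>
    EReal.coe_toReal hw (hfbot w)
  obtain ⟨p, hp⟩ := hfproper
  have hB := CJT.global_minorant D f hfbot hflsc hmon
  -- a point with a subgradient
  obtain ⟨q, qs, hq, hqs⟩ : ∃ (q : X) (qs : X →L[ℝ] ℝ), f q ≠ ⊤ ∧ qs ∈ D.D f q := by
    have hloc : ∀ᶠ w in 𝓝 p, (((f p).toReal - 1 : ℝ) : EReal) < f w := by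
      refine hflsc p _ ?_
      have h1 : (((f p).toReal - 1 : ℝ) : EReal) < ((f p).toReal : EReal) := by
        exact_mod_cast (by linarith : (f p).toReal - 1 < (f p).toReal)
      exact lt_of_lt_of_eq h1 (hF p hp)
    obtain ⟨r, hr, hrb⟩ := Metric.eventually_nhds_iff.1 hloc
    obtain ⟨z, u, us, ustar, -, -, -, -, hut, hus, -, -⟩ :=
      CJT.approx D f hfbot hflsc (fun _ => 0) continuous_const (convexOn_const 0 convex_univ)
        p hp (r / 2) (4 / r) 1 (by positivity)
        (by rw [show 4 / r * (r / 2) = 2 by field_simp; norm_num]; norm_num) (by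
          intro w hw
          have h := hrb (show dist w p < r by
            have := Metric.mem_closedBall.1 hw; linarith)
          simpa using h.le) (by positivity)
    obtain ⟨n, hn⟩ := hut.exists
    exact ⟨u n, us n, hn, hus n⟩
  -- f is the supremum of its affine minorants
  have hC : ∀ (x : X) (r : ℝ), (r : EReal) < f x →
      ∃ (u : X) (us : X →L[ℝ] ℝ), f u ≠ ⊤ ∧ us ∈ D.D f u ∧ r < (f u).toReal + us (x - u) := by
    intro x r' hr'
    obtain ⟨r, hr1, hr2⟩ := EReal.lt_iff_exists_real_btwn.1 hr'
    have hr1 : r' < r := by exact_mod_cast hr1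
    obtain ⟨δ, hδ, hδb⟩ := Metric.eventually_nhds_iff.1 (hflsc x _ hr2)
    set α := (f q).toReal + qs (x - q) with hα
    set M := ‖qs‖ with hM
    have hM0 : 0 ≤ M := norm_nonneg _
    have hmin : ∀ w, f w ≠ ⊤ → α - M * dist w x ≤ (f w).toReal := by
      intro w hw
      have h1 := hB q hq qs hqs w
      rw [← hF w hw] at h1
      have h1' : (f q).toReal + qs (w - q) ≤ (f w).toReal := by exact_mod_cast h1
      have h2 : qs (w - q) = qs (x - q) + qs (w - x) := by
        rw [← map_add]; congr 1; abel
      have h3 := (abs_le.1 (qs.le_opNorm (w - x))).1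
      rw [← dist_eq_norm, ← hM] at h3
      linarith
    set K := M + |r - α| / δ with hK
    have hK0 : 0 ≤ |r - α| / δ := by positivity
    have hKb : ∀ w, f w ≠ ⊤ → r ≤ (f w).toReal + K * dist w x := by
      intro w hw
      have hd : 0 ≤ dist w x := dist_nonneg
      by_cases hwd : dist w x < δ
      · have h : (r : EReal) < f w := hδb hwd
        rw [← hF w hw] at h
        have h' : r < (f w).toReal := by exact_mod_cast h
        have : 0 ≤ K * dist w x := by positivity
        linarith
      · push Not at hwd
        have h1 := hmin w hw
        have h2 : |r - α| ≤ |r - α| / δ * dist w x := by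
          calc |r - α| = |r - α| / δ * δ := by field_simp
            _ ≤ _ := mul_le_mul_of_nonneg_left hwd hK0
        have h3 := le_abs_self (r - α)
        rw [hK, add_mul]
        linarith
    let k : X → ℝ := fun w => (K + 1) * dist w x
    have hKp : 0 ≤ K + 1 := by positivity
    have hKp' := hKb p hp
    have hdp : 0 ≤ dist p x := dist_nonneg
    obtain ⟨z, u, us, ustar, -, hzt, hu, hfu, hut, hus, hlim, hsub⟩ :=
      CJT.approx D f hfbot hflsc k (by fun_prop) ((convexOn_univ_dist x).smul hKp)
        p hp ((f p).toReal + k p - r + 1) 1 ((f p).toReal + k p - r) one_pos (by linarith) (by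
          intro w _
          by_cases hwt : f w = ⊤
          · rw [hwt, EReal.top_add_coe]; exact le_top
          rw [← hF w hwt]
          have h := hKb w hwt
          have hd : 0 ≤ dist w x := dist_nonneg
          have : (f p).toReal + k p - ((f p).toReal + k p - r) ≤ (f w).toReal + k w := by
            simp only [k]; linarith
          exact_mod_cast this) (by simp only [k]; linarith)
    have hs := hsub x
    simp only [k, dist_self] at hs
    rw [dist_comm x z] at hs
    have hz := hKb z hzt
    have hT := hfu.add (hlim x)
    have hlt : r' < (f z).toReal + ustar (x - z) := by linarith
    obtain ⟨n, hn1, hn2⟩ := ((hT.eventually (lt_mem_nhds hlt)).and hut).exists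
    exact ⟨u n, us n, hn2, hus n, hn1⟩
  intro x _ y _ a b ha hb hab
  by_contra hcon
  push Not at hcon
  obtain ⟨r, hr1, hr2⟩ := EReal.lt_iff_exists_real_btwn.1 hcon
  obtain ⟨u, us, hu, hus, hlt⟩ := hC _ r hr2
  have h1 := mul_le_mul_of_nonneg_left (hB u hu us hus x) (EReal.coe_nonneg.2 ha)
  have h2 := mul_le_mul_of_nonneg_left (hB u hu us hus y) (EReal.coe_nonneg.2 hb)
  have h3 := (add_le_add h1 h2).trans_lt hr1
  have h4 : a * ((f u).toReal + us (x - u)) + b * ((f u).toReal + us (y - u)) < r := by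
    exact_mod_cast h3
  have h5 : us (a • x + b • y - u) = a * us (x - u) + b * us (y - u) := by
    have : a • x + b • y - u = a • (x - u) + b • (y - u) := by
      have h6 : u = a • u + b • u := by rw [← add_smul, hab, one_smul]
      conv_lhs => rw [h6]
      simp only [smul_sub]; abel
    rw [this]; simp
  have h7 : a * (f u).toReal + b * (f u).toReal = (f u).toReal := by
    rw [← add_mul, hab, one_mul]
  rw [h5] at hlt
  nlinarith
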